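/- Let r ≥ 1 be an integer and λ(p; s) = p^r + Σ_{i=1}^{r−1} s_i p^{r−1−i} a polynomial in p with coefficients s = (s_1, …, s_{r−1}). Let p(ξ; s) = ξ + Σ_{k≥1} u_k(s) ξ^{−k} be the unique formal solution in ξ + ℚ[s][[ξ^{−1}]] of λ(p; s) = ξ^r. Then for every k ≥ 1, k·u_k(s) = −Σ_{n_1,…,n_{r−1} ≥ 0, 2n_1 + 3n_2 + ⋯ + r·n_{r−1} = k+1} binom(k/r, Σ_i n_i)·multinomial(Σ_i n_i; n_1,…,n_{r−1})·s_1^{n_1}⋯s_{r−1}^{n_{r−1}}, where binom(k/r, j) = (k/r)(k/r − 1)⋯(k/r − j + 1)/j! is a generalized binomial coefficient. -/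

import Mathlib

/-- Generalized binomial coefficient `binom(q,d) = q(q-1)⋯(q-d+1)/d!` for `q ∈ ℚ`. -/
def qbinom (q : ℚ) (d : ℕ) : ℚ :=
  (∏ i ∈ Finset.range d, (q - (i : ℚ))) / (d.factorial : ℚ)

open PowerSeries in
/-- The series `X ^ (-j - 2) * U ^ j * (U - X * derivative U)` is, up to a nonzero constant, the
derivative of `(U / X) ^ (j + 1)`, so its residue vanishes. -/
lemma coeff_pow_mul_sub_X_mul_derivative {A : Type*} [CommRing A] [Algebra ℚ A] (U : A⟦X⟧)
    (j : ℕ) :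
    coeff (j + 1) (U ^ j * (U - X * derivative A U)) = 0 := by
  have hd := congrArg (coeff j) (derivative_pow U (j + 1))
  rw [coeff_derivative, Nat.add_sub_cancel, mul_assoc, ← map_natCast (C (R := A)),
    coeff_C_mul] at hd
  have hu : IsUnit ((j : A) + 1) := by
    have := (IsUnit.mk0 ((j : ℚ) + 1) (by positivity)).map (algebraMap ℚ A)
    simpa using this
  rw [Nat.cast_succ, mul_comm] at hd
  have hd' := hu.mul_left_cancel hd
  rw [show U ^ j * (U - X * derivative A U) = U ^ (j + 1) - X * (U ^ j * derivative A U) by ring,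
    map_sub, coeff_succ_X_mul, hd', sub_self]

open PowerSeries in
lemma coeff_residue_pow {A : Type*} [CommRing A] [Algebra ℚ A] {U V : A⟦X⟧}
    (hUV : U * V = 1) (hU : constantCoeff U = 1) (k m : ℕ) :
    coeff (k + 1) (U ^ k * (X * V) ^ m * (U - X * derivative A U)) =
      if m = k + 1 then 1 else 0 := by
  rw [show U ^ k * (X * V) ^ m * (U - X * derivative A U) =
    X ^ m * (U ^ k * V ^ m * (U - X * derivative A U)) by ring, coeff_X_pow_mul']
  rcases lt_trichotomy m (k + 1) with h | h | h
  · obtain ⟨j, rfl⟩ := Nat.exists_eq_add_of_le (Nat.lt_succ_iff.mp h)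
    rw [if_pos h.le, if_neg h.ne, pow_add, mul_right_comm (U ^ m), ← mul_pow, hUV, one_pow, one_mul,
      show m + j + 1 - m = j + 1 by lia, coeff_pow_mul_sub_X_mul_derivative]
  · have hV : constantCoeff V = 1 := by simpa [hU] using congrArg constantCoeff hUV
    subst h
    simp [hU, hV]
  · rw [if_neg (by lia), if_neg (by lia)]

open PowerSeries in
lemma eq_of_pow_eq_pow_of_constantCoeff {A : Type*} [CommRing A] [IsDomain A] [CharZero A]
    {f g : A⟦X⟧} (hf : constantCoeff f = 1) (hg : constantCoeff g = 1) {r : ℕ} (hr : r ≠ 0)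
    (h : f ^ r = g ^ r) : f = g := by
  have h0 := (Commute.all f g).geom_sum₂_mul r
  rw [h, sub_self] at h0
  rcases mul_eq_zero.mp h0 with h1 | h1
  · have := congrArg constantCoeff h1
    simp [hf, hg, hr] at this
  · exact sub_eq_zero.mp h1

open PowerSeries in
lemma binomialSeries_nsmul {R : Type*} [CommRing R] [BinomialRing R] (A : Type*) [CommRing A]
    [Algebra R A] (q : R) (r : ℕ) :
    binomialSeries A (r • q) = binomialSeries A q ^ r := by
  induction r with
  | zero => simp
  | succ r ih => rw [succ_nsmul, binomialSeries_add, ih, pow_succ]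

open PowerSeries in
/-- If `V ^ r = 1 + G`, then `V ^ k` is the binomial series `(1 + G) ^ (k / r)`. -/
lemma subst_binomialSeries_eq_pow {A : Type*} [CommRing A] [IsDomain A] [Algebra ℚ A]
    {V G : A⟦X⟧} (hV : constantCoeff V = 1) (hG : constantCoeff G = 0) {r : ℕ} (hr : r ≠ 0)
    (h : V ^ r = 1 + G) (k : ℕ) :
    (binomialSeries A ((k : ℚ) / r)).subst G = V ^ k := by
  have : CharZero A := algebraRat.charZero A
  have hs : HasSubst G := HasSubst.of_constantCoeff_zero' hG
  refine eq_of_pow_eq_pow_of_constantCoeff ?_ (by simp [hV]) hr ?_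
  · rw [eq_X_mul_shift_add_const (binomialSeries A ((k : ℚ) / r)), binomialSeries_constantCoeff,
      subst_add hs, subst_mul hs, subst_X hs, map_one, ← coe_substAlgHom hs]
    simp [hG]
  · rw [← subst_pow hs, ← binomialSeries_nsmul, nsmul_eq_mul, mul_div_cancel₀ _ (by simpa),
      binomialSeries_nat, ← coe_substAlgHom hs, map_pow, map_add, map_one, substAlgHom_X, ← h,
      ← pow_mul, ← pow_mul, mul_comm]

open PowerSeries in
lemma exists_subst_eq_sum_add {A : Type*} [CommRing A] {G : A⟦X⟧} (hG : constantCoeff G = 0)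
    (f : A⟦X⟧) (N : ℕ) :
    ∃ E : A⟦X⟧, f.subst G = ∑ d ∈ Finset.range N, C (coeff d f) * G ^ d + X ^ N * E := by
  have hs : HasSubst G := HasSubst.of_constantCoeff_zero' hG
  obtain ⟨H, rfl⟩ := X_dvd_iff.mpr hG
  rw [eq_X_pow_mul_shift_add_trunc N f, subst_add hs, subst_mul hs, subst_pow hs, subst_X hs,
    subst_coe hs, ← eq_X_pow_mul_shift_add_trunc N f, trunc_apply, Finset.range_eq_Ico]
  refine ⟨H ^ N * (mk fun i ↦ coeff (i + N) f).subst (X * H), ?_⟩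
  rw [map_sum, add_comm, mul_pow, mul_assoc]
  congr 1
  refine Finset.sum_congr rfl fun d _ ↦ ?_
  rw [Polynomial.aeval_monomial]
  rfl

lemma qbinom_eq_choose (q : ℚ) (d : ℕ) : qbinom q d = Ring.choose q d := by
  rw [Ring.choose_eq_smul, qbinom, div_eq_inv_mul, smul_eq_mul]
  congr 1
  induction d with
  | zero => simp
  | succ d ih =>
    rw [Finset.prod_range_succ, ih, descPochhammer_succ_right, Polynomial.smeval_mul]
    simp [Polynomial.smeval_sub, Polynomial.smeval_natCast]

open PowerSeries in
lemma sum_C_mul_pow_eq {A : Type*} [CommRing A] {ι : Type*} [Fintype ι] [DecidableEq ι]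
    (s : ι → A) (w : ι → ℕ) (Q : A⟦X⟧) (d : ℕ) :
    (∑ i, C (s i) * Q ^ w i) ^ d =
      ∑ n ∈ Finset.piAntidiag Finset.univ d,
        C ((Nat.multinomial Finset.univ n : A) * ∏ i, s i ^ n i) * Q ^ ∑ i, w i * n i := by
  rw [Finset.sum_pow_eq_sum_piAntidiag]
  refine Finset.sum_congr rfl fun n _ ↦ ?_
  simp only [mul_pow, Finset.prod_mul_distrib, ← pow_mul, Finset.prod_pow_eq_pow_sum, map_mul,
    map_natCast, map_prod, map_pow, mul_assoc]

open PowerSeries in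
/-- Lagrange inversion for `V ^ r = 1 + ∑ i, s i (η V) ^ w i`, where `U = V⁻¹`. -/
lemma lagrange_inversion_coeff {A : Type*} [CommRing A] [IsDomain A] [Algebra ℚ A]
    {ι : Type*} [Fintype ι] [DecidableEq ι] (s : ι → A) (w : ι → ℕ) (hw : ∀ i, w i ≠ 0)
    {U V : A⟦X⟧} (hUV : U * V = 1) (hU : constantCoeff U = 1) {r : ℕ} (hr : r ≠ 0)
    (h : V ^ r = 1 + ∑ i, C (s i) * (X * V) ^ w i) (k : ℕ) :
    (k : A) * coeff (k + 1) U = -∑ d ∈ Finset.range (k + 2),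
      ∑ n ∈ (Finset.piAntidiag Finset.univ d).filter (fun n ↦ ∑ i, w i * n i = k + 1),
        Ring.choose ((k : ℚ) / r) d •
          ((Nat.multinomial Finset.univ n : A) * ∏ i, s i ^ n i) := by
  have hV : constantCoeff V = 1 := by simpa [hU] using congrArg constantCoeff hUV
  have hG : constantCoeff (∑ i, C (s i) * (X * V) ^ w i) = 0 := by
    simp [hw]
  obtain ⟨E, hE⟩ := exists_subst_eq_sum_add hG (binomialSeries A ((k : ℚ) / r)) (k + 2)
  rw [subst_binomialSeries_eq_pow hV hG hr h] at hE
  set D : A⟦X⟧ := U - X * derivative A U with hD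
  have hcoeff : coeff (k + 1) D = -((k : A) * coeff (k + 1) U) := by
    rw [hD, map_sub, coeff_succ_X_mul, coeff_derivative]
    ring
  rw [← neg_eq_iff_eq_neg, ← hcoeff, show D = U ^ k * V ^ k * D by
    rw [← mul_pow, hUV, one_pow, one_mul], hE, mul_add, add_mul, map_add,
    show U ^ k * (X ^ (k + 2) * E) * D = X ^ (k + 2) * (U ^ k * E * D) by ring,
    coeff_X_pow_mul', if_neg (by lia), add_zero, Finset.mul_sum, Finset.sum_mul, map_sum]
  refine Finset.sum_congr rfl fun d _ ↦ ?_
  rw [sum_C_mul_pow_eq, Finset.mul_sum, Finset.mul_sum, Finset.sum_mul, map_sum,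
    Finset.sum_filter]
  refine Finset.sum_congr rfl fun n _ ↦ ?_
  rw [← mul_assoc (C _), ← map_mul, mul_left_comm, mul_assoc, coeff_C_mul, hD,
    coeff_residue_pow hUV hU, binomialSeries_coeff, smul_mul_assoc, one_mul, mul_ite, mul_one,
    mul_zero]

/-- Splitting the tuples of weight `N` according to the sum of their entries. -/
lemma sum_box_filter_eq_sum_piAntidiag {M : Type*} [AddCommMonoid M] {ι : Type*} [Fintype ι]
    [DecidableEq ι] (w : ι → ℕ) (hw : ∀ i, w i ≠ 0) (N : ℕ) (f : ℕ → (ι → ℕ) → M) :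
    ∑ n ∈ (Fintype.piFinset fun _ : ι ↦ Finset.range (N + 1)).filter
        (fun n ↦ ∑ i, w i * n i = N), f (∑ i, n i) n =
      ∑ d ∈ Finset.range (N + 1),
        ∑ n ∈ (Finset.piAntidiag Finset.univ d).filter (fun n ↦ ∑ i, w i * n i = N), f d n := by
  have hle (n : ι → ℕ) : ∑ i, n i ≤ ∑ i, w i * n i :=
    Finset.sum_le_sum fun i _ ↦ Nat.le_mul_of_pos_left _ (Nat.pos_of_ne_zero (hw i))
  rw [← Finset.sum_fiberwise_of_maps_to (t := Finset.range (N + 1)) (g := fun n ↦ ∑ i, n i)]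
  · refine Finset.sum_congr rfl fun d _ ↦ Finset.sum_congr ?_ ?_
    · ext n
      have hn := hle n
      simp only [Finset.mem_filter, Fintype.mem_piFinset, Finset.mem_range,
        Finset.mem_piAntidiag, Finset.mem_univ, implies_true, and_true]
      constructor
      · rintro ⟨⟨_, h⟩, h'⟩
        exact ⟨h', h⟩
      · rintro ⟨h', h⟩
        refine ⟨⟨fun i ↦ ?_, h⟩, h'⟩
        have := Finset.single_le_sum (fun j _ ↦ Nat.zero_le (n j)) (Finset.mem_univ i)
        lia
    · intro n hn
      simp only [Finset.mem_filter, Finset.mem_piAntidiag] at hn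
      rw [hn.1.1]
  · intro n hn
    have := hle n
    simp only [Finset.mem_filter] at hn
    simp only [Finset.mem_range]
    lia

open PowerSeries in
lemma eq_single_mul_ofPowerSeries {A : Type*} [CommRing A] (P : LaurentSeries A)
    (hlow : ∀ n : ℤ, n < -1 → P.coeff n = 0) :
    P = HahnSeries.single (-1) 1 *
      HahnSeries.ofPowerSeries ℤ A (mk fun n ↦ P.coeff ((n : ℤ) - 1)) := by
  ext n
  rw [show n = (n + 1) + (-1) by ring, HahnSeries.coeff_single_mul_add, one_mul,
    PowerSeries.coeff_coe]
  split_ifs with h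
  · exact hlow _ (by lia)
  · rw [coeff_mk]
    congr 1
    lia

open PowerSeries in
/-- The equation satisfied by `U = η P`, in terms of `V = U⁻¹`. -/
lemma pow_eq_one_add_of_laurent_eq {A : Type*} [CommRing A] {r : ℕ} (s : Fin (r - 1) → A)
    {U V : A⟦X⟧} (hUV : U * V = 1)
    (hP : (HahnSeries.single (-1) 1 * HahnSeries.ofPowerSeries ℤ A U) ^ r +
        ∑ i : Fin (r - 1), HahnSeries.C (s i) *
          (HahnSeries.single (-1) 1 * HahnSeries.ofPowerSeries ℤ A U) ^ (r - 2 - (i : ℕ)) =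
      HahnSeries.single (-(r : ℤ)) 1) :
    V ^ r = 1 + ∑ i : Fin (r - 1), C (s i) * (X * V) ^ ((i : ℕ) + 2) := by
  set Y : LaurentSeries A := HahnSeries.single (-1) 1 with hY
  have hXY : HahnSeries.ofPowerSeries ℤ A X * Y = 1 := by
    simp [hY, HahnSeries.ofPowerSeries_X]
  have hYV : HahnSeries.ofPowerSeries ℤ A U * HahnSeries.ofPowerSeries ℤ A V = 1 := by
    rw [← map_mul, hUV, map_one]
  have hYr : HahnSeries.single (-(r : ℤ)) (1 : A) = Y ^ r := by
    simp [hY, HahnSeries.single_pow]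
  rw [hYr] at hP
  apply HahnSeries.ofPowerSeries_injective (Γ := ℤ)
  generalize HahnSeries.ofPowerSeries ℤ A U = u at hP hYV
  generalize hx : HahnSeries.ofPowerSeries ℤ A X = x at hXY
  simp only [map_add, map_one, map_sum, map_mul, map_pow, HahnSeries.ofPowerSeries_C, hx]
  generalize HahnSeries.ofPowerSeries ℤ A V = v at hYV
  have hmul := congrArg (fun t ↦ (x * v) ^ r * t) hP
  have hxv : (x * v) * (Y * u) = 1 := by linear_combination u * v * hXY + hYV
  have hYx : (x * v) ^ r * Y ^ r = v ^ r := by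
    rw [← mul_pow, show x * v * Y = (x * Y) * v by ring, hXY, one_mul]
  simp only [mul_add, Finset.mul_sum, hYx, ← mul_pow, hxv, one_pow] at hmul
  rw [← hmul]
  congr 1
  refine Finset.sum_congr rfl fun i _ ↦ ?_
  have hi := i.2
  rw [show (x * v) ^ r = (x * v) ^ ((i : ℕ) + 2) * (x * v) ^ (r - 2 - (i : ℕ)) by
    rw [← pow_add]; congr 1; lia, mul_left_comm, mul_assoc,
    ← mul_pow, hxv, one_pow, mul_one]

/-- Let `r ≥ 1` and `λ(p;s) = p^r + Σ_{i=1}^{r-1} s_i p^{r-1-i}`, with the `s_i` formal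
variables.  Let `p(ξ;s) = ξ + Σ_{k≥1} u_k(s) ξ^{-k}` be the unique formal solution of
`λ(p;s) = ξ^r` (encoded as a Laurent series `P` in the variable `η = ξ⁻¹`, so that
`u_k(s) = P.coeff k`).  Then for every `k ≥ 1`,
`k·u_k(s) = - Σ_{n₁,…,n_{r-1} ≥ 0, 2n₁+3n₂+⋯+r·n_{r-1} = k+1}
   binom(k/r, Σᵢ nᵢ)·multinomial(Σᵢ nᵢ; n₁,…,n_{r-1})·s₁^{n₁}⋯s_{r-1}^{n_{r-1}}`. -/
theorem stmt13 (r : ℕ) (hr : 1 ≤ r)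
    (P : LaurentSeries (MvPolynomial (Fin (r - 1)) ℚ))
    (hlead : P.coeff (-1) = 1)
    (hzero : P.coeff 0 = 0)
    (hlow : ∀ n : ℤ, n < -1 → P.coeff n = 0)
    (hP : P ^ r + ∑ i : Fin (r - 1),
            HahnSeries.C (MvPolynomial.X i) * P ^ (r - 2 - (i : ℕ))
          = HahnSeries.single (-(r : ℤ)) (1 : MvPolynomial (Fin (r - 1)) ℚ)) :
    ∀ k : ℕ, 1 ≤ k →
      (k : MvPolynomial (Fin (r - 1)) ℚ) * P.coeff (k : ℤ)
        = - ∑ n ∈ (Fintype.piFinset fun _ : Fin (r - 1) => Finset.range (k + 2)).filter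
              (fun n => ∑ i : Fin (r - 1), ((i : ℕ) + 2) * n i = k + 1),
            qbinom ((k : ℚ) / (r : ℚ)) (∑ i : Fin (r - 1), n i) •
              ((Nat.multinomial Finset.univ n : MvPolynomial (Fin (r - 1)) ℚ) *
                ∏ i : Fin (r - 1), (MvPolynomial.X i : MvPolynomial (Fin (r - 1)) ℚ) ^ (n i)) := by
  intro k _
  set U : PowerSeries (MvPolynomial (Fin (r - 1)) ℚ) :=
    PowerSeries.mk fun n ↦ P.coeff ((n : ℤ) - 1) with hUdef
  have hU : PowerSeries.constantCoeff U = 1 := by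
    rw [← PowerSeries.coeff_zero_eq_constantCoeff_apply, hUdef, PowerSeries.coeff_mk]
    simpa using hlead
  obtain ⟨V, hUV⟩ := (PowerSeries.isUnit_iff_constantCoeff.mpr (hU ▸ isUnit_one)).exists_right_inv
  rw [eq_single_mul_ofPowerSeries P hlow] at hP
  have h := lagrange_inversion_coeff MvPolynomial.X (fun i : Fin (r - 1) ↦ (i : ℕ) + 2)
    (fun _ ↦ by simp) hUV hU (by lia) (pow_eq_one_add_of_laurent_eq _ hUV hP) k
  have hk : PowerSeries.coeff (k + 1) U = P.coeff (k : ℤ) := by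
    simp [hUdef]
  simp only [qbinom_eq_choose]
  rw [← hk, h, ← sum_box_filter_eq_sum_piAntidiag (fun i : Fin (r - 1) ↦ (i : ℕ) + 2)
    (fun _ ↦ by simp) (k + 1) (fun d n ↦ Ring.choose ((k : ℚ) / r) d •
      ((Nat.multinomial Finset.univ n : MvPolynomial (Fin (r - 1)) ℚ) *
        ∏ i, (MvPolynomial.X i : MvPolynomial (Fin (r - 1)) ℚ) ^ n i))]
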